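/- arXiv:2401.12968 — 2 statements merged into one kernel-verified Lean document; each statement's English description precedes it below -/
import Mathlib

section
/- As the half-integer S tends to infinity, α_GP(S) → α_BOV and α_L(S) → α_BOV, where α_GP(S) = inf_{ρ∈[−1,0)} f_S(ρ), α_BOV = inf_{ρ∈[−1,0)} g(ρ), and α_L(S) = (S/(S+1))² α_BOV. -/
open Matrix MeasureTheory Filter
open scoped BigOperators RealInnerProductSpace Kronecker

noncomputable section

/-- The spin value `S = n/2` for a half-integer spin encoded by `n : ℕ` (`n ≥ 1` means `S ≥ 1/2`). -/
def spinVal (n : ℕ) : ℝ := (n : ℝ) / 2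

/-- The Gauss hypergeometric function `₂F₁(1/2, 1/2; 5/2; x)`, defined by its power series
`Σ_{k≥0} ((1/2)_k (1/2)_k)/((5/2)_k k!) x^k`, where `(a)_k` is the rising factorial. -/
def hypF (x : ℝ) : ℝ :=
  ∑' k : ℕ,
    ((∏ m ∈ Finset.range k, ((1:ℝ)/2 + m)) * (∏ m ∈ Finset.range k, ((1:ℝ)/2 + m))
      / ((∏ m ∈ Finset.range k, ((5:ℝ)/2 + m)) * (Nat.factorial k))) * x ^ k

/-- `F*(3, ρ) = (8/(3π)) ρ ₂F₁(1/2,1/2;5/2;ρ²)`. -/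
def Fstar (ρ : ℝ) : ℝ := (8 / (3 * Real.pi)) * ρ * hypF (ρ ^ 2)

/-- `f_S(ρ) = (1 − F*(3,ρ)) / (1 − ((S+1)/S) ρ)`. -/
def fS (S ρ : ℝ) : ℝ := (1 - Fstar ρ) / (1 - ((S + 1) / S) * ρ)

/-- `g(ρ) = (1 − F*(3,ρ)) / (1 − ρ)`. -/
def gBOV (ρ : ℝ) : ℝ := (1 - Fstar ρ) / (1 - ρ)

/-- `α_GP(S) = inf_{ρ ∈ [−1, 0)} f_S(ρ)`. -/
def alphaGP (S : ℝ) : ℝ := sInf (fS S '' Set.Ico (-1 : ℝ) 0)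

/-- `α_BOV = inf_{ρ ∈ [−1, 0)} g(ρ)`. -/
def alphaBOV : ℝ := sInf (gBOV '' Set.Ico (-1 : ℝ) 0)

/-!
For `ρ ≤ 0` the numerator `1 - F*(3, ρ)` is nonnegative, and with `c = (S + 1) / S ≥ 1` the
denominators satisfy `1 - ρ ≤ 1 - c ρ ≤ c (1 - ρ)`. Hence `c⁻¹ g ≤ f_S ≤ g` uniformly on `[-1, 0)`,
so `c⁻¹ α_BOV ≤ α_GP(S) ≤ α_BOV`, and `c⁻¹ = S / (S + 1) → 1`.
-/

section IInf

variable {ι κ : Type*} {l : Filter ι}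

theorem bddBelow_range_of_forall_mul_le {f g : κ → ℝ} {q : ℝ} (hq : 0 ≤ q)
    (hg : BddBelow (Set.range g)) (h : ∀ k, q * g k ≤ f k) : BddBelow (Set.range f) := by
  obtain ⟨b, hb⟩ := hg
  exact ⟨q * b, Set.forall_mem_range.2 fun k =>
    (mul_le_mul_of_nonneg_left (hb ⟨k, rfl⟩) hq).trans (h k)⟩

theorem mul_iInf_le_iInf_of_forall_mul_le {f g : κ → ℝ} {q : ℝ} (hq : 0 ≤ q)
    (hg : BddBelow (Set.range g)) (h : ∀ k, q * g k ≤ f k) : q * ⨅ k, g k ≤ ⨅ k, f k := by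
  rw [Real.mul_iInf_of_nonneg hq]
  exact ciInf_mono (bddBelow_range_of_forall_mul_le hq hg fun _ => le_rfl) h

theorem tendsto_iInf_of_mul_le_of_le {q : ι → ℝ} {f : ι → κ → ℝ} {g : κ → ℝ}
    (hq : Tendsto q l (nhds 1)) (hg : BddBelow (Set.range g))
    (hlower : ∀ᶠ i in l, ∀ k, q i * g k ≤ f i k) (hupper : ∀ᶠ i in l, ∀ k, f i k ≤ g k) :
    Tendsto (fun i => ⨅ k, f i k) l (nhds (⨅ k, g k)) := by
  have hq_nonneg : ∀ᶠ i in l, 0 ≤ q i := hq.eventually_const_le one_pos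
  have hq_mul : Tendsto (fun i => q i * ⨅ k, g k) l (nhds (⨅ k, g k)) := by
    simpa only [one_mul] using hq.mul_const (⨅ k, g k)
  refine tendsto_of_tendsto_of_tendsto_of_le_of_le' hq_mul tendsto_const_nhds ?_ ?_
  · filter_upwards [hq_nonneg, hlower] with i hi hle
    exact mul_iInf_le_iInf_of_forall_mul_le hi hg hle
  · filter_upwards [hq_nonneg, hlower, hupper] with i hi hle hge
    exact ciInf_mono (bddBelow_range_of_forall_mul_le hi hg hle) hge

end IInf

section Field

variable {K : Type*} [Field K] [LinearOrder K] [IsStrictOrderedRing K] {a c x : K}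

theorem one_le_add_one_div_self (hx : 0 < x) : 1 ≤ (x + 1) / x :=
  (one_le_div hx).2 (by linarith)

theorem div_one_sub_mul_le_div_one_sub (ha : 0 ≤ a) (hc : 1 ≤ c) (hx : x ≤ 0) :
    a / (1 - c * x) ≤ a / (1 - x) := by
  have hcx : c * x ≤ x := mul_le_of_one_le_left hx hc
  exact div_le_div_of_nonneg_left ha (by linarith) (by linarith)

theorem inv_mul_div_one_sub_le_div_one_sub_mul (ha : 0 ≤ a) (hc : 1 ≤ c) (hx : x ≤ 0) :
    c⁻¹ * (a / (1 - x)) ≤ a / (1 - c * x) := by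
  have hcx : c * x ≤ 0 := mul_nonpos_of_nonneg_of_nonpos (zero_le_one.trans hc) hx
  calc c⁻¹ * (a / (1 - x)) = a / (c - c * x) := by
        rw [inv_mul_eq_div, div_div, mul_comm, mul_one_sub]
    _ ≤ a / (1 - c * x) := div_le_div_of_nonneg_left ha (by linarith) (by linarith)

end Field

theorem tendsto_div_add_one_atTop : Tendsto (fun x : ℝ => x / (x + 1)) atTop (nhds 1) := by
  have hinv : Tendsto (fun x : ℝ => (x + 1)⁻¹) atTop (nhds 0) :=
    tendsto_inv_atTop_zero.comp (tendsto_atTop_add_const_right _ 1 tendsto_id)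
  have hsub : Tendsto (fun x : ℝ => 1 - (x + 1)⁻¹) atTop (nhds 1) := by
    simpa only [sub_zero] using hinv.const_sub 1
  refine hsub.congr' ?_
  filter_upwards [eventually_ge_atTop 0] with x hx
  field_simp
  ring

theorem tendsto_spinVal_atTop : Tendsto spinVal atTop atTop :=
  tendsto_natCast_atTop_atTop.atTop_div_const two_pos

/-- For `1 < x` the defining series diverges, so that `hypF x` is the junk value `0`. -/
theorem hypF_nonneg {x : ℝ} (hx : 0 ≤ x) : 0 ≤ hypF x :=
  tsum_nonneg fun k => by positivity

theorem Fstar_nonpos {ρ : ℝ} (hρ : ρ ≤ 0) : Fstar ρ ≤ 0 :=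
  mul_nonpos_of_nonpos_of_nonneg (mul_nonpos_of_nonneg_of_nonpos (by positivity) hρ)
    (hypF_nonneg (sq_nonneg ρ))

theorem one_sub_Fstar_nonneg {ρ : ℝ} (hρ : ρ ≤ 0) : 0 ≤ 1 - Fstar ρ :=
  sub_nonneg.2 ((Fstar_nonpos hρ).trans zero_le_one)

theorem gBOV_nonneg {ρ : ℝ} (hρ : ρ ≤ 0) : 0 ≤ gBOV ρ :=
  div_nonneg (one_sub_Fstar_nonneg hρ) (by linarith)

theorem fS_le_gBOV {S ρ : ℝ} (hS : 0 < S) (hρ : ρ ≤ 0) : fS S ρ ≤ gBOV ρ :=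
  div_one_sub_mul_le_div_one_sub (one_sub_Fstar_nonneg hρ) (one_le_add_one_div_self hS) hρ

theorem div_add_one_mul_gBOV_le_fS {S ρ : ℝ} (hS : 0 < S) (hρ : ρ ≤ 0) :
    S / (S + 1) * gBOV ρ ≤ fS S ρ := by
  rw [← inv_div (S + 1) S]
  exact inv_mul_div_one_sub_le_div_one_sub_mul (one_sub_Fstar_nonneg hρ)
    (one_le_add_one_div_self hS) hρ

theorem tendsto_alphaGP_atTop : Tendsto alphaGP atTop (nhds alphaBOV) := by
  have hg : BddBelow (Set.range fun ρ : Set.Ico (-1 : ℝ) 0 => gBOV ρ) :=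
    ⟨0, Set.forall_mem_range.2 fun ρ => gBOV_nonneg ρ.2.2.le⟩
  unfold alphaGP alphaBOV
  simp only [sInf_image']
  refine tendsto_iInf_of_mul_le_of_le tendsto_div_add_one_atTop hg ?_ ?_
  · filter_upwards [eventually_gt_atTop 0] with S hS ρ
    exact div_add_one_mul_gBOV_le_fS hS ρ.2.2.le
  · filter_upwards [eventually_gt_atTop 0] with S hS ρ
    exact fS_le_gBOV hS ρ.2.2.le

theorem alphaGP_alphaL_tendsto_alphaBOV_general :
    Tendsto alphaGP atTop (nhds alphaBOV)
      ∧ Tendsto (fun S : ℝ => (S / (S + 1)) ^ 2 * alphaBOV) atTop (nhds alphaBOV) := by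
  refine ⟨tendsto_alphaGP_atTop, ?_⟩
  simpa only [one_pow, one_mul] using (tendsto_div_add_one_atTop.pow 2).mul_const alphaBOV

/-- As the half-integer `S = n/2` tends to infinity, `α_GP(S) → α_BOV` and
`α_L(S) = (S/(S+1))² α_BOV → α_BOV`. -/
theorem alphaGP_alphaL_tendsto_alphaBOV :
    Tendsto (fun n : ℕ => alphaGP (spinVal n)) atTop (nhds alphaBOV)
      ∧ Tendsto (fun n : ℕ => (spinVal n / (spinVal n + 1)) ^ 2 * alphaBOV)
          atTop (nhds alphaBOV) := by
  exact alphaGP_alphaL_tendsto_alphaBOV_general.imp (·.comp tendsto_spinVal_atTop)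
    (·.comp tendsto_spinVal_atTop)

end
end

section
/- The function g satisfies g(−1) = g(0) = 1 and g(ρ) > 1 for all ρ ∈ (0,1); consequently inf_{ρ∈[−1,1)} g(ρ) = inf_{ρ∈[−1,0)} g(ρ), and this infimum is attained at some point of [−1,0). -/
/-! For `0 < Re (c - a - b)` the contiguous relation
`c (c - a - b) F(c) = (c - a) (c - b) F(c + 1)`, where `F(c) = ₂F₁(a, b; c; 1)`, holds because the
difference of its two sides telescopes coefficientwise and `n` times the `n`-th coefficient tends
to `0`. Iterating it pushes `c` to infinity, where `F` tends to `1`, while the accumulated factors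
are quotients of Euler's products for `Γ`; this is Gauss's summation theorem. It gives
`₂F₁(1/2, 1/2; 5/2; 1) = 3π/8`, so `F*(3, ±1) = ±1`. As the coefficients are positive,
`F*(3, ρ) < ρ`, i.e. `1 < g(ρ)`, on `(0, 1)`. Finally `g` is continuous on `[-1, 0]` with equal
values at the endpoints, so its minimum there is attained in `[-1, 0)`. -/

open Matrix MeasureTheory Filter
open scoped BigOperators RealInnerProductSpace Kronecker

noncomputable section

section Hypergeometric

open Asymptotics Complex Topology

local notation "hgCoeff" => ordinaryHypergeometricCoefficient

lemma ascPochhammer_eval_eq_prod_range {R : Type*} [CommSemiring R] (n : ℕ) (r : R) :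
    (ascPochhammer R n).eval r = ∏ j ∈ Finset.range n, (r + j) := by
  induction n with
  | zero => simp
  | succ n ih => rw [ascPochhammer_succ_eval, ih, Finset.prod_range_succ]

section Coefficients

variable {K : Type*} [Field K] (a b c : K)

lemma hgCoeff_zero : hgCoeff a b c 0 = 1 := by
  simp [ordinaryHypergeometricCoefficient]

lemma hgCoeff_succ (k : ℕ) :
    hgCoeff a b c (k + 1) = hgCoeff a b c k * ((a + k) * (b + k) / ((c + k) * (k + 1))) := by
  simp only [ordinaryHypergeometricCoefficient, ascPochhammer_succ_eval, Nat.factorial_succ,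
    Nat.cast_mul, Nat.cast_add_one, mul_inv, div_eq_mul_inv]
  ring

variable {c}

lemma hgCoeff_add_one_right (hc : c ≠ 0) (k : ℕ) :
    hgCoeff a b (c + 1) k = hgCoeff a b c k * (c / (c + k)) := by
  have shift : c * (ascPochhammer K k).eval (c + 1) = (ascPochhammer K k).eval c * (c + k) := by
    rw [← ascPochhammer_succ_eval, ascPochhammer_succ_left]
    simp
  have shift_inv : ((ascPochhammer K k).eval (c + 1))⁻¹ =
      ((ascPochhammer K k).eval c)⁻¹ * (c / (c + k)) := by
    rw [div_eq_mul_inv, mul_left_comm, ← mul_inv, ← shift, mul_inv, mul_inv_cancel_left₀ hc]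
  rw [ordinaryHypergeometricCoefficient, shift_inv, ← mul_assoc]

lemma hgCoeff_contiguous [CharZero K] (hc : ∀ m : ℕ, c ≠ -m) (k : ℕ) :
    c * (c - a - b) * hgCoeff a b c k - (c - a) * (c - b) * hgCoeff a b (c + 1) k =
      c * (k * hgCoeff a b c k) - c * ((k + 1 : ℕ) * hgCoeff a b c (k + 1)) := by
  have hck : c + k ≠ 0 := fun h => hc k (eq_neg_of_add_eq_zero_left h)
  have hk : (k : K) + 1 ≠ 0 := k.cast_add_one_ne_zero
  rw [hgCoeff_succ, hgCoeff_add_one_right a b (by simpa using hc 0)]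
  generalize hgCoeff a b c k = t
  push_cast
  field_simp
  ring

end Coefficients

section EulerProduct

lemma eventually_GammaSeq_neg_natCast_eq_zero (m : ℕ) : ∀ᶠ n in atTop, GammaSeq (-m) n = 0 := by
  filter_upwards [eventually_ge_atTop m] with n hn
  rw [GammaSeq, Finset.prod_eq_zero (Finset.mem_range.2 (Nat.lt_succ_of_le hn)) (by simp), div_zero]

lemma tendsto_inv_GammaSeq (s : ℂ) :
    Tendsto (fun n => (GammaSeq s n)⁻¹) atTop (𝓝 (Gamma s)⁻¹) := by
  rcases eq_or_ne (Gamma s) 0 with hs | hs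
  · obtain ⟨m, rfl⟩ := (Gamma_eq_zero_iff s).1 hs
    rw [hs]
    exact tendsto_nhds_of_eventually_eq
      ((eventually_GammaSeq_neg_natCast_eq_zero m).mono fun n hn => by rw [hn])
  · exact (GammaSeq_tendsto_Gamma s).inv₀ hs

lemma natCast_cpow_ne_zero {n : ℕ} (hn : n ≠ 0) (s : ℂ) : (n : ℂ) ^ s ≠ 0 :=
  cpow_ne_zero_iff.2 (.inl (Nat.cast_ne_zero.2 hn))

lemma ascPochhammer_eval_succ_eq_mul_inv_GammaSeq (s : ℂ) {n : ℕ} (hn : n ≠ 0) :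
    (ascPochhammer ℂ (n + 1)).eval s = n ^ s * n.factorial * (GammaSeq s n)⁻¹ := by
  have hfac : (n.factorial : ℂ) ≠ 0 := Nat.cast_ne_zero.2 n.factorial_ne_zero
  rw [ascPochhammer_eval_eq_prod_range, GammaSeq, inv_div,
    mul_div_cancel₀ _ (mul_ne_zero (natCast_cpow_ne_zero hn s) hfac)]

end EulerProduct

section GaussSummation

variable (a b c : ℂ)

-- `GammaSeq s n` vanishes exactly when `s ∈ {0, -1, …, -n}`, where `0⁻¹ = 0` makes both sides `0`.
lemma succ_mul_hgCoeff_succ {n : ℕ} (hn : n ≠ 0) :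
    (n + 1 : ℕ) * hgCoeff a b c (n + 1) =
      n ^ (a + b - c) * ((GammaSeq a n)⁻¹ * (GammaSeq b n)⁻¹ * GammaSeq c n) := by
  have hn' : (n : ℂ) ≠ 0 := Nat.cast_ne_zero.2 hn
  have hpow := natCast_cpow_ne_zero hn c
  have hfac : (n.factorial : ℂ) ≠ 0 := Nat.cast_ne_zero.2 n.factorial_ne_zero
  have hsucc : (n : ℂ) + 1 ≠ 0 := n.cast_add_one_ne_zero
  simp only [ordinaryHypergeometricCoefficient, ascPochhammer_eval_succ_eq_mul_inv_GammaSeq _ hn,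
    Nat.factorial_succ, mul_inv, inv_inv]
  rw [cpow_sub _ _ hn', cpow_add _ _ hn']
  push_cast
  field_simp

lemma succ_mul_hgCoeff_succ_isBigO :
    (fun n : ℕ => (n + 1 : ℕ) * hgCoeff a b c (n + 1)) =O[atTop]
      fun n : ℕ => (n : ℝ) ^ (a + b - c).re := by
  have hpow : (fun n : ℕ => (n : ℂ) ^ (a + b - c)) =O[atTop]
      fun n : ℕ => (n : ℝ) ^ (a + b - c).re :=
    .of_norm_eventuallyLE <| (eventually_gt_atTop 0).mono fun n hn =>
      (norm_natCast_cpow_of_pos hn _).le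
  have hGamma := (((tendsto_inv_GammaSeq a).mul (tendsto_inv_GammaSeq b)).mul
    (GammaSeq_tendsto_Gamma c)).isBigO_one ℝ
  refine (hpow.mul hGamma).congr' ?_ (.of_eq (by simp))
  filter_upwards [eventually_ne_atTop 0] with n hn using (succ_mul_hgCoeff_succ a b c hn).symm

variable {a b c}

lemma tendsto_nat_mul_hgCoeff (h : (a + b).re < c.re) :
    Tendsto (fun n : ℕ => n * hgCoeff a b c n) atTop (𝓝 0) := by
  have hre : 0 < -(a + b - c).re := by simpa using h
  have hpow : Tendsto (fun n : ℕ => (n : ℝ) ^ (a + b - c).re) atTop (𝓝 0) := by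
    simpa only [neg_neg] using! (tendsto_rpow_neg_atTop hre).comp tendsto_natCast_atTop_atTop
  exact (tendsto_add_atTop_iff_nat 1).1 ((succ_mul_hgCoeff_succ_isBigO a b c).trans_tendsto hpow)

lemma summable_hgCoeff (h : (a + b).re < c.re) : Summable (hgCoeff a b c) := by
  have hre : (a + b - c).re - 1 < -1 := by rw [sub_re]; linarith
  refine (summable_nat_add_iff 1).1 <|
    summable_of_isBigO_nat (Real.summable_nat_rpow.2 hre) ?_
  have hinv : (fun n : ℕ => ((n + 1 : ℕ) : ℂ)⁻¹) =O[atTop] fun n : ℕ => (n : ℝ)⁻¹ := by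
    refine .of_norm_eventuallyLE <| (eventually_gt_atTop 0).mono fun n hn => ?_
    simp only [norm_inv, norm_natCast]
    gcongr
    simp
  refine (hinv.mul (succ_mul_hgCoeff_succ_isBigO a b c)).congr' ?_ ?_
  · exact .of_forall fun n => inv_mul_cancel_left₀ (Nat.cast_ne_zero.2 n.succ_ne_zero) _
  · filter_upwards [eventually_gt_atTop 0] with n hn
    rw [Real.rpow_sub_one (by positivity), div_eq_inv_mul]

lemma tsum_hgCoeff_contiguous (hc : ∀ m : ℕ, c ≠ -m) (h : (a + b).re < c.re) :
    c * (c - a - b) * ∑' k, hgCoeff a b c k =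
      (c - a) * (c - b) * ∑' k, hgCoeff a b (c + 1) k := by
  have h' : (a + b).re < (c + 1).re := h.trans (by simp)
  have hsum := ((summable_hgCoeff h).hasSum.mul_left (c * (c - a - b))).sub
    ((summable_hgCoeff h').hasSum.mul_left ((c - a) * (c - b)))
  have hpartial : Tendsto (fun n : ℕ => -(c * (n * hgCoeff a b c n))) atTop (𝓝 0) := by
    simpa using ((tendsto_nat_mul_hgCoeff h).const_mul c).neg
  refine sub_eq_zero.1 <| tendsto_nhds_unique hsum.tendsto_sum_nat (hpartial.congr fun n => ?_)
  simp_rw [hgCoeff_contiguous a b hc, Finset.sum_range_sub' fun k : ℕ => c * (k * hgCoeff a b c k)]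
  simp

lemma norm_hgCoeff_add_one_le (hc : 0 < c.re) (k : ℕ) :
    ‖hgCoeff a b (c + 1) k‖ ≤ ‖hgCoeff a b c k‖ := by
  have hc0 : c ≠ 0 := fun h => hc.ne' (by rw [h, zero_re])
  have hle : ‖c‖ ≤ ‖c + k‖ := by
    rw [← sq_le_sq₀ (norm_nonneg _) (norm_nonneg _), Complex.sq_norm, Complex.sq_norm,
      normSq_apply, normSq_apply, add_re, add_im, natCast_re, natCast_im, add_zero]
    gcongr <;> simp
  rw [hgCoeff_add_one_right a b hc0, norm_mul, norm_div]
  exact mul_le_of_le_one_right (norm_nonneg _) (div_le_one_of_le₀ hle (norm_nonneg _))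

variable (a b c)

lemma tendsto_hgCoeff_add_natCast (k : ℕ) :
    Tendsto (fun N : ℕ => hgCoeff a b (c + N) k) atTop (𝓝 (Pi.single (M := fun _ => ℂ) 0 1 k)) := by
  rcases k.eq_zero_or_pos with rfl | hk
  · simp [hgCoeff_zero]
  · have hdeg : 0 < (ascPochhammer ℂ k).degree :=
      Polynomial.natDegree_pos_iff_degree_pos.1 (by rwa [ascPochhammer_natDegree])
    have hN : Tendsto (fun N : ℕ => ‖c + N‖) atTop atTop :=
      tendsto_norm_cobounded_atTop.comp <|
        (tendsto_const_add_cobounded c).comp tendsto_natCast_atTop_cobounded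
    have := tendsto_inv₀_cobounded.comp
      (tendsto_norm_atTop_iff_cobounded.1 (Polynomial.tendsto_norm_atTop _ hdeg hN))
    simpa [hk.ne'] using this.const_mul ((k.factorial : ℂ)⁻¹ *
      (ascPochhammer ℂ k).eval a * (ascPochhammer ℂ k).eval b)

lemma tendsto_tsum_hgCoeff_add_natCast :
    Tendsto (fun N : ℕ => ∑' k, hgCoeff a b (c + N) k) atTop (𝓝 1) := by
  obtain ⟨M, hM⟩ := exists_nat_gt (max (-c.re) ((a + b).re - c.re))
  obtain ⟨hM_pos, hM_sum⟩ := max_lt_iff.1 hM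
  have hanti (k : ℕ) : AntitoneOn (fun N : ℕ => ‖hgCoeff a b (c + N) k‖) (Set.Ici M) := by
    refine antitoneOn_nat_Ici_of_succ_le fun N hN => ?_
    have hre : 0 < (c + N).re := by
      rw [add_re, natCast_re]
      linarith [(Nat.cast_le (α := ℝ)).2 hN]
    simpa only [Nat.cast_add_one, add_assoc] using norm_hgCoeff_add_one_le hre k
  have hdom : Summable fun k => ‖hgCoeff a b (c + M) k‖ :=
    (summable_hgCoeff (by rw [add_re c, natCast_re]; linarith)).norm
  have := tendsto_tsum_of_dominated_convergence hdom (tendsto_hgCoeff_add_natCast a b c)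
    ((eventually_ge_atTop M).mono fun N hN k => hanti k Set.self_mem_Ici hN hN)
  simpa using this

variable {a b c}

lemma tsum_hgCoeff_eq_prod_mul (hc : ∀ m : ℕ, c ≠ -m) (h : (a + b).re < c.re) (N : ℕ) :
    ∑' k, hgCoeff a b c k =
      (∏ j ∈ Finset.range N, (c - a + j) * (c - b + j) / ((c + j) * (c - a - b + j))) *
        ∑' k, hgCoeff a b (c + N) k := by
  induction N with
  | zero => simp
  | succ N ih =>
    have hcN (m : ℕ) : c + N ≠ -m := fun hm => hc (N + m) (by push_cast; linear_combination hm)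
    have hN : (a + b).re < (c + N).re := by
      rw [add_re c, natCast_re]
      linarith [N.cast_nonneg (α := ℝ)]
    have hne : c - a - b + N ≠ 0 := fun h0 => by
      have hab : a + b = c + N := by linear_combination -h0
      exact hN.ne (congr_arg re hab)
    have hcontig := tsum_hgCoeff_contiguous hcN hN
    have hcN0 : c + N ≠ 0 := by simpa using hcN 0
    rw [ih, Finset.prod_range_succ, mul_assoc]
    congr 1
    rw [div_mul_eq_mul_div, eq_div_iff (mul_ne_zero hcN0 hne)]
    push_cast
    rw [← add_assoc]
    linear_combination hcontig

lemma tendsto_prod_range_div :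
    Tendsto (fun N : ℕ => ∏ j ∈ Finset.range N,
        (c - a + j) * (c - b + j) / ((c + j) * (c - a - b + j))) atTop
      (𝓝 (Gamma c * Gamma (c - a - b) / (Gamma (c - a) * Gamma (c - b)))) := by
  have hlim := ((GammaSeq_tendsto_Gamma c).mul (GammaSeq_tendsto_Gamma (c - a - b))).mul
    ((tendsto_inv_GammaSeq (c - a)).mul (tendsto_inv_GammaSeq (c - b)))
  rw [← mul_inv, ← div_eq_mul_inv] at hlim
  refine (tendsto_add_atTop_iff_nat 1).1 (hlim.congr' ?_)
  filter_upwards [eventually_ne_atTop 0] with n hn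
  have hn' : (n : ℂ) ≠ 0 := Nat.cast_ne_zero.2 hn
  have hfac : (n.factorial : ℂ) ≠ 0 := Nat.cast_ne_zero.2 n.factorial_ne_zero
  have hpow := natCast_cpow_ne_zero hn
  have hpow_a := hpow a
  have hpow_b := hpow b
  have hpow_c := hpow c
  simp only [Finset.prod_div_distrib, Finset.prod_mul_distrib, ← ascPochhammer_eval_eq_prod_range,
    ascPochhammer_eval_succ_eq_mul_inv_GammaSeq _ hn, cpow_sub _ _ hn']
  field_simp

theorem ordinaryHypergeometric_one (hc : ∀ m : ℕ, c ≠ -m) (h : (a + b).re < c.re) :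
    ₂F₁ a b c (1 : ℂ) = Gamma c * Gamma (c - a - b) / (Gamma (c - a) * Gamma (c - b)) := by
  have hlim := (tendsto_prod_range_div (a := a) (b := b) (c := c)).mul
    (tendsto_tsum_hgCoeff_add_natCast a b c)
  have hconst := hlim.congr fun N => (tsum_hgCoeff_eq_prod_mul hc h N).symm
  simpa [ordinaryHypergeometric_eq_tsum] using tendsto_nhds_unique tendsto_const_nhds hconst

end GaussSummation

section RealParameters

lemma ofReal_hgCoeff (a b c : ℝ) (k : ℕ) :
    ((hgCoeff a b c k : ℝ) : ℂ) = hgCoeff (a : ℂ) b c k := by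
  simp [ordinaryHypergeometricCoefficient, ascPochhammer_eval_eq_prod_range]

lemma ofReal_ordinaryHypergeometric (a b c x : ℝ) :
    ((₂F₁ a b c x : ℝ) : ℂ) = ₂F₁ (a : ℂ) b c (x : ℂ) := by
  simp [ordinaryHypergeometric_eq_tsum, ofReal_tsum, ascPochhammer_eval_eq_prod_range]

variable {a b c : ℝ}

lemma summable_hgCoeff_real (h : a + b < c) : Summable (hgCoeff a b c) := by
  refine summable_ofReal.1 ?_
  simpa only [ofReal_hgCoeff] using summable_hgCoeff (a := a) (b := b) (c := c) (by simpa using h)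

lemma hgCoeff_pos (ha : 0 < a) (hb : 0 < b) (hc : 0 < c) (k : ℕ) : 0 < hgCoeff a b c k := by
  have := ascPochhammer_pos k a ha
  have := ascPochhammer_pos k b hb
  have := ascPochhammer_pos k c hc
  positivity

theorem ordinaryHypergeometric_one_real (hc : ∀ m : ℕ, c ≠ -m) (h : a + b < c) :
    ₂F₁ a b c (1 : ℝ) =
      Real.Gamma c * Real.Gamma (c - a - b) / (Real.Gamma (c - a) * Real.Gamma (c - b)) := by
  have := ordinaryHypergeometric_one (a := a) (b := b) (c := c) (mod_cast hc) (by simpa using h)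
  apply ofReal_injective
  rw [ofReal_ordinaryHypergeometric, ofReal_one, this]
  simp only [ofReal_div, ofReal_mul, ← Complex.Gamma_ofReal, ofReal_sub]

end RealParameters

lemma continuousOn_tsum_mul_pow {𝕜 : Type*} [NormedField 𝕜] [CompleteSpace 𝕜] {u : ℕ → 𝕜}
    (hu : Summable fun n => ‖u n‖) :
    ContinuousOn (fun x => ∑' n, u n * x ^ n) (Metric.closedBall 0 1) := by
  refine continuousOn_tsum (fun n => by fun_prop) hu fun n x hx => ?_
  rw [norm_mul, norm_pow]
  exact mul_le_of_le_one_right (norm_nonneg _)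
    (pow_le_one₀ (norm_nonneg _) (mem_closedBall_zero_iff.1 hx))

lemma strictMonoOn_tsum_mul_pow {u : ℕ → ℝ} (hu : Summable u) (hnonneg : ∀ n, 0 ≤ u n) {i : ℕ}
    (hi : i ≠ 0) (hpos : 0 < u i) :
    StrictMonoOn (fun x => ∑' n, u n * x ^ n) (Set.Icc 0 1) := by
  have hsum {x : ℝ} (hx : x ∈ Set.Icc (0 : ℝ) 1) : Summable fun n => u n * x ^ n :=
    hu.of_nonneg_of_le (fun n => mul_nonneg (hnonneg n) (pow_nonneg hx.1 n))
      fun n => mul_le_of_le_one_right (hnonneg n) (pow_le_one₀ hx.1 hx.2)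
  intro x hx y hy hxy
  refine Summable.tsum_lt_tsum (i := i) (fun n => ?_) ?_ (hsum hx) (hsum hy)
  · exact mul_le_mul_of_nonneg_left (pow_le_pow_left₀ hx.1 hxy.le n) (hnonneg n)
  · exact mul_lt_mul_of_pos_left (pow_lt_pow_left₀ hxy hx.1 hi) hpos

section OrdinaryHypergeometric

variable {a b c : ℝ}

lemma continuousOn_ordinaryHypergeometric (h : a + b < c) :
    ContinuousOn (₂F₁ a b c : ℝ → ℝ) (Metric.closedBall 0 1) := by
  rw [ordinaryHypergeometric_eq_tsum]
  exact continuousOn_tsum_mul_pow (summable_hgCoeff_real h).norm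

lemma strictMonoOn_ordinaryHypergeometric (ha : 0 < a) (hb : 0 < b) (h : a + b < c) :
    StrictMonoOn (₂F₁ a b c : ℝ → ℝ) (Set.Icc 0 1) := by
  have hpos := hgCoeff_pos ha hb ((add_pos ha hb).trans h)
  rw [ordinaryHypergeometric_eq_tsum]
  exact strictMonoOn_tsum_mul_pow (summable_hgCoeff_real h) (fun n => (hpos n).le) one_ne_zero
    (hpos 1)

end OrdinaryHypergeometric

end Hypergeometric

lemma exists_mem_Ico_isMinOn_Icc {α β : Type*} [PartialOrder α] [TopologicalSpace α]
    [CompactIccSpace α] [LinearOrder β] [TopologicalSpace β] [ClosedIicTopology β]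
    {f : α → β} {a b : α} (hab : a < b) (hf : ContinuousOn f (Set.Icc a b)) (hle : f a ≤ f b) :
    ∃ x ∈ Set.Ico a b, IsMinOn f (Set.Icc a b) x := by
  obtain ⟨x, hx, hmin⟩ := isCompact_Icc.exists_isMinOn (Set.nonempty_Icc.2 hab.le) hf
  rcases hx.2.lt_or_eq with hxb | rfl
  · exact ⟨x, ⟨hx.1, hxb⟩, hmin⟩
  · exact ⟨a, Set.left_mem_Ico.2 hab, fun y hy => hle.trans (hmin hy)⟩

lemma sInf_image_eq_of_isMinOn {α β : Type*} [ConditionallyCompleteLinearOrder β] {f : α → β}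
    {s : Set α} {x : α} (hx : x ∈ s) (h : IsMinOn f s x) : sInf (f '' s) = f x :=
  sInf_image'.trans (h.iInf_eq hx)

lemma hypF_eq_ordinaryHypergeometric : hypF = ₂F₁ (1 / 2 : ℝ) (1 / 2) (5 / 2) := by
  ext x
  simp only [hypF, ordinaryHypergeometric_eq_tsum, ascPochhammer_eval_eq_prod_range, smul_eq_mul]
  congr! 2
  field_simp

lemma hypF_one : hypF 1 = 3 * Real.pi / 8 := by
  have hc (m : ℕ) : (5 / 2 : ℝ) ≠ -m := by
    have : (0 : ℝ) ≤ m := m.cast_nonneg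
    linarith
  have hGamma_three_halves : Real.Gamma (3 / 2) = √Real.pi / 2 := by
    rw [show (3 / 2 : ℝ) = 1 / 2 + 1 by norm_num, Real.Gamma_add_one (by norm_num),
      Real.Gamma_one_half_eq]
    ring
  have hGamma_five_halves : Real.Gamma (5 / 2) = 3 * √Real.pi / 4 := by
    rw [show (5 / 2 : ℝ) = 3 / 2 + 1 by norm_num, Real.Gamma_add_one (by norm_num),
      hGamma_three_halves]
    ring
  rw [hypF_eq_ordinaryHypergeometric, ordinaryHypergeometric_one_real hc (by norm_num)]
  calc Real.Gamma (5 / 2) * Real.Gamma (5 / 2 - 1 / 2 - 1 / 2) /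
        (Real.Gamma (5 / 2 - 1 / 2) * Real.Gamma (5 / 2 - 1 / 2))
    _ = Real.Gamma (5 / 2) * Real.Gamma (3 / 2) / (Real.Gamma 2 * Real.Gamma 2) := by norm_num
    _ = 3 / 8 * √Real.pi ^ 2 := by
      rw [hGamma_five_halves, hGamma_three_halves, Real.Gamma_two]
      ring
    _ = 3 * Real.pi / 8 := by
      rw [Real.sq_sqrt Real.pi_pos.le]
      ring

lemma Fstar_neg_one : Fstar (-1) = -1 := by
  rw [Fstar, neg_one_sq, hypF_one]
  field_simp

lemma Fstar_lt_self {ρ : ℝ} (hρ : ρ ∈ Set.Ioo 0 1) : Fstar ρ < ρ := by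
  have hsq : ρ ^ 2 < 1 := pow_lt_one₀ hρ.1.le hρ.2 two_ne_zero
  have hlt : hypF (ρ ^ 2) < hypF 1 := by
    rw [hypF_eq_ordinaryHypergeometric]
    exact strictMonoOn_ordinaryHypergeometric (by norm_num) (by norm_num) (by norm_num)
      ⟨sq_nonneg ρ, hsq.le⟩ (Set.right_mem_Icc.2 zero_le_one) hsq
  have hcoeff : 0 < 8 / (3 * Real.pi) * ρ := mul_pos (by positivity) hρ.1
  calc Fstar ρ < 8 / (3 * Real.pi) * ρ * hypF 1 := mul_lt_mul_of_pos_left hlt hcoeff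
    _ = ρ := by rw [hypF_one]; field_simp

lemma continuousOn_Fstar : ContinuousOn Fstar (Set.Icc (-1) 1) := by
  have hF : ContinuousOn hypF (Metric.closedBall 0 1) := by
    rw [hypF_eq_ordinaryHypergeometric]
    exact continuousOn_ordinaryHypergeometric (by norm_num)
  refine .mul (by fun_prop) (hF.comp (by fun_prop) fun ρ hρ => ?_)
  simpa [abs_le] using hρ

lemma gBOV_neg_one : gBOV (-1) = 1 := by
  rw [gBOV, Fstar_neg_one]
  norm_num

lemma gBOV_zero : gBOV 0 = 1 := by
  simp [gBOV, Fstar]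

lemma one_lt_gBOV {ρ : ℝ} (hρ : ρ ∈ Set.Ioo 0 1) : 1 < gBOV ρ := by
  rw [gBOV, one_lt_div (sub_pos.2 hρ.2)]
  exact sub_lt_sub_left (Fstar_lt_self hρ) 1

lemma continuousOn_gBOV : ContinuousOn gBOV (Set.Ico (-1) 1) :=
  (continuousOn_const.sub (continuousOn_Fstar.mono Set.Ico_subset_Icc_self)).div (by fun_prop)
    fun _ hρ => (sub_pos.2 hρ.2).ne'

lemma exists_isMinOn_gBOV : ∃ ρ ∈ Set.Ico (-1 : ℝ) 0, IsMinOn gBOV (Set.Ico (-1) 1) ρ := by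
  obtain ⟨ρ, hρ, hmin⟩ := exists_mem_Ico_isMinOn_Icc (neg_lt_zero.2 one_pos)
    (continuousOn_gBOV.mono (Set.Icc_subset_Ico_right one_pos))
    (gBOV_neg_one.trans gBOV_zero.symm).le
  refine ⟨ρ, hρ, fun y hy => ?_⟩
  rcases le_or_gt y 0 with hy0 | hy0
  · exact hmin ⟨hy.1, hy0⟩
  · calc gBOV ρ ≤ gBOV 0 := hmin (Set.right_mem_Icc.2 (neg_nonpos.2 zero_le_one))
      _ = 1 := gBOV_zero
      _ ≤ gBOV y := (one_lt_gBOV ⟨hy0, hy.2⟩).le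

/-- The function `g` satisfies `g(−1) = g(0) = 1` and `g(ρ) > 1` for all
`ρ ∈ (0,1)`; consequently `inf_{ρ∈[−1,1)} g(ρ) = inf_{ρ∈[−1,0)} g(ρ)`, and this infimum is
attained at some point of `[−1, 0)`. -/
theorem gBOV_inf_attained :
    gBOV (-1) = 1 ∧ gBOV 0 = 1
      ∧ (∀ ρ ∈ Set.Ioo (0 : ℝ) 1, 1 < gBOV ρ)
      ∧ sInf (gBOV '' Set.Ico (-1 : ℝ) 1) = sInf (gBOV '' Set.Ico (-1 : ℝ) 0)
      ∧ ∃ ρ ∈ Set.Ico (-1 : ℝ) 0, gBOV ρ = sInf (gBOV '' Set.Ico (-1 : ℝ) 0) := by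
  obtain ⟨ρ, hρ, hmin⟩ := exists_isMinOn_gBOV
  have hsub : Set.Ico (-1 : ℝ) 0 ⊆ Set.Ico (-1) 1 := Set.Ico_subset_Ico_right zero_le_one
  have hinf : sInf (gBOV '' Set.Ico (-1) 1) = gBOV ρ := sInf_image_eq_of_isMinOn (hsub hρ) hmin
  have hinf_neg : sInf (gBOV '' Set.Ico (-1) 0) = gBOV ρ :=
    sInf_image_eq_of_isMinOn hρ (hmin.on_subset hsub)
  exact ⟨gBOV_neg_one, gBOV_zero, fun _ => one_lt_gBOV, hinf.trans hinf_neg.symm,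
    ρ, hρ, hinf_neg.symm⟩

end
end
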